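/- Let A generate an α-times resolvent family {S_α(t)}_{t≥0} on X, where 1 < α < 2, let r > 0, and suppose S_α(·) is of bounded semivariation on [0,r]. If f : [0,r] → X is continuous, then for every t ∈ [0,r] the element (P_α*f)(t) = ∫_0^t P_α(t−s)f(s) ds belongs to D(A), and A((P_α*f)(t)) is the limit of the Riemann–Stieltjes sums −Σ_{i=1}^n (S_α(t−s_i) − S_α(t−s_{i−1})) f(ξ_i): for every ε > 0 there exists δ > 0 such that for every partition 0 = s_0 < s_1 < ⋯ < s_n = t with max_i (s_i − s_{i−1}) < δ and every choice of tags ξ_i ∈ [s_{i−1}, s_i], one has ‖A((P_α*f)(t)) + Σ_{i=1}^n (S_α(t−s_i) − S_α(t−s_{i−1})) f(ξ_i)‖ < ε. -/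

import Mathlib

open MeasureTheory Set

/-- `g β t = t^(β-1)/Γ(β)`. -/
noncomputable def g (β t : ℝ) : ℝ := t ^ (β - 1) / Real.Gamma β

/-- `Pa α S t x = (g_{α-1} * S)(t) x = ∫_0^t g_{α-1}(t-s) S(s) x ds`. -/
noncomputable def Pa {X : Type*} [NormedAddCommGroup X] [NormedSpace ℂ X]
    (α : ℝ) (S : ℝ → X →L[ℂ] X) (t : ℝ) (x : X) : X :=
  ∫ s in (0:ℝ)..t, g (α - 1) (t - s) • S s x

/-- `G` is of bounded semivariation on `[0, r]`: the quantities
`‖∑ (G(d_{i+1}) - G(d_i)) x_i‖` over all partitions `0 = d_0 < ⋯ < d_n = r`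
and all vectors of norm at most one are uniformly bounded. -/
def BoundedSemivariation {X : Type*} [NormedAddCommGroup X] [NormedSpace ℂ X]
    (G : ℝ → X →L[ℂ] X) (r : ℝ) : Prop :=
  ∃ C : ℝ, ∀ (n : ℕ) (d : ℕ → ℝ) (x : ℕ → X),
    d 0 = 0 → d n = r → (∀ i < n, d i < d (i + 1)) → (∀ i, ‖x i‖ ≤ 1) →
    ‖∑ i ∈ Finset.range n, (G (d (i + 1)) - G (d i)) (x i)‖ ≤ C

open Filter Topology

/-!
Let `G s = S (t - s)`, and call `f` good if `A` sends `∫ s in 0..t, Pa α S (t - s) (f s)` to minus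
the limit of the Riemann–Stieltjes sums of `f` against `G`. Good functions are closed under
addition, and also under uniform limits on `[0, t]`: bounded semivariation makes the
Riemann–Stieltjes sums converge uniformly in the partition, the operators `P_α` are uniformly
bounded, and `A` is closed. A Heaviside step `1_{[c, ∞)} x` is good because its sums telescope to
values of `G` and `A ((g_α * S)(u) x) = S u x - x`, where `g_α * S` is the primitive of `P_α`.
Every continuous function is a uniform limit of sums of such steps.
-/

section Kernel

variable {β : ℝ}

theorem g_nonneg (hβ : 0 < β) {t : ℝ} (ht : 0 ≤ t) : 0 ≤ g β t :=
  div_nonneg (Real.rpow_nonneg ht _) (Real.Gamma_pos_of_pos hβ).le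

theorem g_le_g (hβ : 1 ≤ β) {s t : ℝ} (hs : 0 ≤ s) (hst : s ≤ t) : g β s ≤ g β t :=
  div_le_div_of_nonneg_right (Real.rpow_le_rpow hs hst (by linarith))
    (Real.Gamma_pos_of_pos (by linarith)).le

theorem intervalIntegrable_g (hβ : 0 < β) (a b : ℝ) : IntervalIntegrable (g β) volume a b :=
  (intervalIntegral.intervalIntegrable_rpow' (by linarith)).div_const _

theorem intervalIntegrable_g_sub_left (hβ : 0 < β) (v a b : ℝ) :
    IntervalIntegrable (fun s => g β (v - s)) volume a b := by
  simpa using (intervalIntegrable_g hβ (v - a) (v - b)).comp_sub_left v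

theorem integral_g (hβ : 0 < β) (t : ℝ) : ∫ s in (0 : ℝ)..t, g β s = g (β + 1) t := by
  simp only [g]
  rw [intervalIntegral.integral_div, integral_rpow (Or.inl (by linarith)),
    Real.Gamma_add_one hβ.ne', sub_add_cancel, Real.zero_rpow hβ.ne', sub_zero, div_div,
    add_sub_cancel_right]

end Kernel

section Convolution

variable {E : Type*} [NormedAddCommGroup E] [NormedSpace ℝ E] {k : ℝ → ℝ} {φ : ℝ → E} {u : ℝ}

theorem integral_truncated_convolution {v : ℝ} (hv : v ∈ Ioc 0 u) :
    ∫ s, (Ioc 0 u).indicator k (v - s) • (Ioc 0 u).indicator φ s =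
      ∫ s in (0 : ℝ)..v, k (v - s) • φ s := by
  rw [intervalIntegral.integral_of_le hv.1.le, integral_Ioc_eq_integral_Ioo,
    ← integral_indicator measurableSet_Ioo]
  congr 1 with s
  by_cases hs : s ∈ Ioo 0 v
  · have hvs : v - s ∈ Ioc 0 u := ⟨by linarith [hs.2], by linarith [hs.1, hv.2]⟩
    have hsu : s ∈ Ioc 0 u := ⟨hs.1, hs.2.le.trans hv.2⟩
    rw [indicator_of_mem hs, indicator_of_mem hvs, indicator_of_mem hsu]
  · rw [indicator_of_notMem hs]
    rcases not_and_or.1 hs with hs | hs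
    · rw [indicator_of_notMem (fun h => hs h.1) φ, smul_zero]
    · rw [indicator_of_notMem (fun h => hs (by linarith [h.1])) k, zero_smul]

theorem integral_indicator_Ioc_sub_right {s : ℝ} (hs : s ∈ Ioc 0 u) :
    ∫ v in (0 : ℝ)..u, (Ioc 0 u).indicator k (v - s) = ∫ w in (0 : ℝ)..(u - s), k w := by
  rw [intervalIntegral.integral_comp_sub_right,
    intervalIntegral.integral_of_le (by linarith [hs.1, hs.2]),
    setIntegral_indicator measurableSet_Ioc, Ioc_inter_Ioc,
    intervalIntegral.integral_of_le (by linarith [hs.2]), sup_eq_right.2 (by linarith [hs.1]),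
    inf_eq_left.2 (by linarith [hs.1])]

theorem integrable_truncated_convolution_integrand (hu : 0 ≤ u)
    (hk : IntervalIntegrable k volume 0 u) (hφ : IntervalIntegrable φ volume 0 u) :
    Integrable (Function.uncurry fun v s : ℝ =>
      (Ioc 0 u).indicator k (v - s) • (Ioc 0 u).indicator φ s)
      ((volume.restrict (uIoc 0 u)).prod volume) := by
  rw [intervalIntegrable_iff_integrableOn_Ioc_of_le hu,
    ← integrable_indicator_iff measurableSet_Ioc] at hk hφ
  exact (hφ.convolution_integrand (ContinuousLinearMap.lsmul ℝ ℝ).flip hk).mono_measure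
    (Measure.prod_mono Measure.restrict_le_self le_rfl)

theorem intervalIntegrable_convolution (hu : 0 ≤ u)
    (hk : IntervalIntegrable k volume 0 u) (hφ : IntervalIntegrable φ volume 0 u) :
    IntervalIntegrable (fun v => ∫ s in (0 : ℝ)..v, k (v - s) • φ s) volume 0 u := by
  have h := (integrable_truncated_convolution_integrand hu hk hφ).integral_prod_left
  rw [intervalIntegrable_iff]
  rw [uIoc_of_le hu] at h ⊢
  exact IntegrableOn.congr_fun h (fun v hv => integral_truncated_convolution hv) measurableSet_Ioc

theorem integral_convolution [CompleteSpace E] (hu : 0 ≤ u)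
    (hk : IntervalIntegrable k volume 0 u) (hφ : IntervalIntegrable φ volume 0 u) :
    ∫ v in (0 : ℝ)..u, ∫ s in (0 : ℝ)..v, k (v - s) • φ s =
      ∫ s in (0 : ℝ)..u, (∫ w in (0 : ℝ)..(u - s), k w) • φ s := by
  calc
    _ = ∫ v in (0 : ℝ)..u, ∫ s, (Ioc 0 u).indicator k (v - s) • (Ioc 0 u).indicator φ s := by
      simp only [intervalIntegral.integral_of_le hu]
      exact setIntegral_congr_fun measurableSet_Ioc fun v hv =>
        (integral_truncated_convolution hv).symm
    _ = ∫ s, ∫ v in (0 : ℝ)..u, (Ioc 0 u).indicator k (v - s) • (Ioc 0 u).indicator φ s :=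
      intervalIntegral_integral_swap (integrable_truncated_convolution_integrand hu hk hφ)
    _ = ∫ s, (Ioc 0 u).indicator (fun s => (∫ w in (0 : ℝ)..(u - s), k w) • φ s) s := by
      congr 1 with s
      rw [intervalIntegral.integral_smul_const]
      by_cases hs : s ∈ Ioc 0 u
      · simp only [indicator_of_mem hs, integral_indicator_Ioc_sub_right hs]
      · simp only [indicator_of_notMem hs, smul_zero]
    _ = _ := by rw [integral_indicator measurableSet_Ioc, intervalIntegral.integral_of_le hu]

end Convolution

section FractionalIntegral

variable {E : Type*} [NormedAddCommGroup E] [NormedSpace ℝ E] {β : ℝ} {φ : ℝ → E} {v : ℝ}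

/-- The Riemann–Liouville fractional integral `g_β * φ` of order `β`, for `v ≥ 0`. -/
noncomputable def fracInt (β : ℝ) (φ : ℝ → E) (v : ℝ) : E :=
  ∫ s in (0 : ℝ)..v, g β (v - s) • φ s

theorem intervalIntegrable_g_smul (hβ : 0 < β) (hv : 0 ≤ v) (hφ : ContinuousOn φ (Icc 0 v)) :
    IntervalIntegrable (fun s => g β (v - s) • φ s) volume 0 v :=
  (intervalIntegrable_g_sub_left hβ v 0 v).smul_continuousOn (by rwa [uIcc_of_le hv])

theorem intervalIntegrable_fracInt (hβ : 0 < β) (hv : 0 ≤ v) (hφ : ContinuousOn φ (Icc 0 v)) :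
    IntervalIntegrable (fracInt β φ) volume 0 v :=
  intervalIntegrable_convolution hv (intervalIntegrable_g hβ 0 v)
    (hφ.intervalIntegrable_of_Icc hv)

theorem integral_fracInt [CompleteSpace E] (hβ : 0 < β) (hv : 0 ≤ v)
    (hφ : ContinuousOn φ (Icc 0 v)) :
    ∫ w in (0 : ℝ)..v, fracInt β φ w = fracInt (β + 1) φ v := by
  simp only [fracInt]
  rw [integral_convolution hv (intervalIntegrable_g hβ 0 v) (hφ.intervalIntegrable_of_Icc hv)]
  simp only [integral_g hβ]

theorem norm_fracInt_le (hβ : 0 < β) (hv : 0 ≤ v) {M : ℝ} (hM : ∀ s ∈ Icc 0 v, ‖φ s‖ ≤ M) :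
    ‖fracInt β φ v‖ ≤ g (β + 1) v * M := by
  have integral_kernel : ∫ s in (0 : ℝ)..v, g β (v - s) = g (β + 1) v := by
    rw [intervalIntegral.integral_comp_sub_left (g β), sub_self, sub_zero, integral_g hβ]
  rw [← integral_kernel, ← intervalIntegral.integral_mul_const]
  refine intervalIntegral.norm_integral_le_of_norm_le hv (.of_forall fun s hs => ?_)
    ((intervalIntegrable_g_sub_left hβ v 0 v).mul_const M)
  have hg : 0 ≤ g β (v - s) := g_nonneg hβ (sub_nonneg.2 hs.2)
  rw [norm_smul, Real.norm_of_nonneg hg]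
  exact mul_le_mul_of_nonneg_left (hM s (Ioc_subset_Icc_self hs)) hg

end FractionalIntegral

section OperatorFamily

variable {𝕜 E F : Type*} [NontriviallyNormedField 𝕜]
  [NormedAddCommGroup E] [NormedSpace 𝕜 E] [CompleteSpace E]
  [NormedAddCommGroup F] [NormedSpace 𝕜 F]

theorem exists_norm_le_of_strongly_continuousOn {T : Type*} [TopologicalSpace T] {K : Set T}
    (hK : IsCompact K) {S : T → E →L[𝕜] F} (hS : ∀ x, ContinuousOn (fun t => S t x) K) :
    ∃ M, ∀ t ∈ K, ‖S t‖ ≤ M := by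
  obtain ⟨M, hM⟩ := banach_steinhaus (g := fun t : K => S t) fun x =>
    (hK.exists_bound_of_continuousOn (hS x)).imp fun _ hC t => hC t t.2
  exact ⟨M, fun t ht => hM ⟨t, ht⟩⟩

variable [NormedSpace ℝ F] [SMulCommClass ℝ 𝕜 F] {β r : ℝ} {S : ℝ → E →L[𝕜] F}

theorem exists_continuousLinearMap_fracInt (hβ : 0 < β)
    (hS : ∀ x, ContinuousOn (fun t => S t x) (Icc 0 r)) :
    ∃ (P : ℝ → E →L[𝕜] F) (M : ℝ), ∀ v ∈ Icc 0 r,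
      ‖P v‖ ≤ M ∧ ∀ x, P v x = fracInt β (fun s => S s x) v := by
  obtain ⟨M, hM⟩ := exists_norm_le_of_strongly_continuousOn isCompact_Icc hS
  suffices h : ∀ v ∈ Icc 0 r, ∃ P : E →L[𝕜] F,
      ‖P‖ ≤ g (β + 1) r * M ∧ ∀ x, P x = fracInt β (fun s => S s x) v by
    choose! P hP using h
    exact ⟨P, _, hP⟩
  intro v hv
  have hvr : Icc 0 v ⊆ Icc 0 r := Icc_subset_Icc_right hv.2
  have hM0 : 0 ≤ M := (norm_nonneg _).trans (hM v hv)
  have integrable x := intervalIntegrable_g_smul hβ hv.1 ((hS x).mono hvr)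
  let P : E →ₗ[𝕜] F :=
    { toFun x := fracInt β (fun s => S s x) v
      map_add' x y := by
        simp only [fracInt, map_add, smul_add]
        exact intervalIntegral.integral_add (integrable x) (integrable y)
      map_smul' c x := by
        simp only [fracInt, map_smul, smul_comm _ c, RingHom.id_apply]
        exact intervalIntegral.integral_smul _ _ }
  have hPM x : ‖P x‖ ≤ g (β + 1) r * M * ‖x‖ := calc
    ‖P x‖ ≤ g (β + 1) v * (M * ‖x‖) :=
      norm_fracInt_le hβ hv.1 fun s hs => (S s).le_of_opNorm_le (hM s (hvr hs)) x
    _ ≤ g (β + 1) r * (M * ‖x‖) := by gcongr; exact g_le_g (by linarith) hv.1 hv.2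
    _ = g (β + 1) r * M * ‖x‖ := by ring
  exact ⟨P.mkContinuous _ hPM, P.mkContinuous_norm_le
    (mul_nonneg (g_nonneg (by linarith) (hv.1.trans hv.2)) hM0) hPM, fun _ => rfl⟩

end OperatorFamily

section ClosedGraph

theorem integral_mem_of_isClosed {Ω E : Type*} [MeasurableSpace Ω] {μ : Measure Ω}
    [NormedAddCommGroup E] [NormedSpace ℝ E] [CompleteSpace E] {Γ : Submodule ℝ E}
    (hΓ : IsClosed (Γ : Set E)) {φ : Ω → E} (hφ : Integrable φ μ) (hmem : ∀ᵐ ω ∂μ, φ ω ∈ Γ) :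
    ∫ ω, φ ω ∂μ ∈ Γ := by
  have : IsClosed (Γ : Set E) := hΓ
  have hzero : ∫ ω, Γ.mkQL (φ ω) ∂μ = 0 :=
    integral_eq_zero_of_ae (hmem.mono fun ω hω => by simpa using hω)
  rw [Γ.mkQL.integral_comp_comm hφ] at hzero
  simpa using hzero

theorem intervalIntegral_prodMk_mem_of_isClosed {E F : Type*}
    [NormedAddCommGroup E] [NormedSpace ℝ E] [CompleteSpace E]
    [NormedAddCommGroup F] [NormedSpace ℝ F] [CompleteSpace F] {Γ : Submodule ℝ (E × F)}
    (hΓ : IsClosed (Γ : Set (E × F))) {a b : ℝ} (hab : a ≤ b) {φ : ℝ → E} {ψ : ℝ → F}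
    (hφ : IntervalIntegrable φ volume a b) (hψ : IntervalIntegrable ψ volume a b)
    (hmem : ∀ s ∈ Icc a b, (φ s, ψ s) ∈ Γ) :
    (∫ s in a..b, φ s, ∫ s in a..b, ψ s) ∈ Γ := by
  rw [intervalIntegral.integral_of_le hab, intervalIntegral.integral_of_le hab,
    ← integral_pair hφ.1 hψ.1]
  exact integral_mem_of_isClosed hΓ (hφ.1.prodMk hψ.1)
    ((ae_restrict_mem measurableSet_Ioc).mono fun s hs => hmem s (Ioc_subset_Icc_self hs))

end ClosedGraph

/-- A tagged partition `a = node 0 < ⋯ < node n = b` with tags `tag i ∈ [node i, node (i + 1)]`.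
Both are sequences on all of `ℕ`; `node i` for `i > n` and `tag i` for `i ≥ n` are junk. -/
structure TaggedPartition (a b : ℝ) where
  n : ℕ
  node : ℕ → ℝ
  tag : ℕ → ℝ
  node_zero : node 0 = a
  node_last : node n = b
  node_lt : ∀ i < n, node i < node (i + 1)
  tag_mem : ∀ i < n, tag i ∈ Icc (node i) (node (i + 1))

namespace TaggedPartition

variable {a b : ℝ}

section Order

variable (p : TaggedPartition a b) {i j : ℕ}

theorem node_le_node (hij : i ≤ j) (hj : j ≤ p.n) : p.node i ≤ p.node j :=
  (strictMonoOn_Iic_of_lt_succ p.node_lt).monotoneOn (hij.trans hj) hj hij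

theorem node_mem_Icc (hi : i ≤ p.n) : p.node i ∈ Icc a b :=
  ⟨p.node_zero.ge.trans (p.node_le_node i.zero_le hi),
    (p.node_le_node hi le_rfl).trans p.node_last.le⟩

theorem tag_mem_Icc (hi : i < p.n) : p.tag i ∈ Icc a b :=
  Icc_subset_Icc (p.node_mem_Icc hi.le).1 (p.node_mem_Icc hi).2 (p.tag_mem i hi)

theorem tag_le_tag (hij : i ≤ j) (hj : j < p.n) : p.tag i ≤ p.tag j := by
  rcases hij.eq_or_lt with rfl | hij
  · exact le_rfl
  · exact (p.tag_mem i (hij.trans hj)).2.trans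
      ((p.node_le_node hij hj.le).trans (p.tag_mem j hj).1)

theorem exists_le_tag_iff (c : ℝ) : ∃ j ≤ p.n, ∀ i < p.n, c ≤ p.tag i ↔ j ≤ i := by
  classical
  have h : ∃ j, p.n ≤ j ∨ c ≤ p.tag j := ⟨p.n, Or.inl le_rfl⟩
  refine ⟨Nat.find h, Nat.find_min' h (Or.inl le_rfl), fun i hi => ⟨fun hc =>
    Nat.find_min' h (Or.inr hc), fun hj => ?_⟩⟩
  have hc : c ≤ p.tag (Nat.find h) := (Nat.find_spec h).resolve_left (by omega)
  exact hc.trans (p.tag_le_tag hj hi)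

end Order

section Mesh

/-- Every cell of `p` is shorter than `δ`. -/
def MeshLT (p : TaggedPartition a b) (δ : ℝ) : Prop :=
  ∀ i < p.n, p.node (i + 1) - p.node i < δ

/-- The filter on tagged partitions of `[a, b]` along which the mesh tends to zero. -/
def fine (a b : ℝ) : Filter (TaggedPartition a b) :=
  ⨅ δ ∈ Ioi (0 : ℝ), 𝓟 {p | p.MeshLT δ}

theorem hasBasis_fine :
    (fine a b).HasBasis (fun δ : ℝ => 0 < δ) fun δ => {p | p.MeshLT δ} :=
  hasBasis_biInf_principal (fun δ hδ η hη => ⟨min δ η, mem_Ioi.2 (lt_min hδ hη),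
    fun _ hp i hi => (hp i hi).trans_le (min_le_left _ _),
    fun _ hp i hi => (hp i hi).trans_le (min_le_right _ _)⟩) ⟨1, mem_Ioi.2 one_pos⟩

/-- The partition of `[a, b]` into `n + 1` equal cells tagged at their left endpoints. -/
noncomputable def equispaced (hab : a < b) (n : ℕ) : TaggedPartition a b where
  n := n + 1
  node i := a + i * ((b - a) / (n + 1))
  tag i := a + i * ((b - a) / (n + 1))
  node_zero := by simp
  node_last := by
    push_cast
    field_simp
    ring
  node_lt i _ := by
    have := div_pos (sub_pos.2 hab) n.cast_add_one_pos
    push_cast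
    linarith
  tag_mem i _ := by
    have := div_pos (sub_pos.2 hab) n.cast_add_one_pos
    push_cast
    exact ⟨le_rfl, by linarith⟩

theorem fine_neBot (hab : a ≤ b) : (fine a b).NeBot := by
  refine hasBasis_fine.neBot_iff.2 fun {δ} hδ => ?_
  rcases hab.eq_or_lt with rfl | hab
  · exact ⟨⟨0, fun _ => a, fun _ => a, rfl, rfl, by simp, by simp⟩, by simp [MeshLT]⟩
  · obtain ⟨n, hn⟩ := exists_nat_gt ((b - a) / δ)
    refine ⟨equispaced hab n, fun i _ => ?_⟩
    have hlt : (b - a) / (n + 1) < δ := by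
      rw [div_lt_comm₀ n.cast_add_one_pos hδ]
      linarith
    simp only [equispaced]
    push_cast
    linarith

theorem abs_node_sub_lt {p : TaggedPartition a b} {δ c : ℝ} (hδ : 0 < δ) (hp : p.MeshLT δ)
    (hc : c ∈ Icc a b) {j : ℕ} (hjn : j ≤ p.n) (hj : ∀ i < p.n, c ≤ p.tag i ↔ j ≤ i) :
    |p.node j - c| < δ := by
  refine abs_sub_lt_iff.2 ⟨?_, ?_⟩
  · rcases j with _ | i
    · linarith [p.node_zero, hc.1]
    · have hi : p.tag i < c := not_le.1 fun h => absurd ((hj i hjn).1 h) (by omega)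
      linarith [(p.tag_mem i hjn).1, hp i hjn]
  · rcases hjn.eq_or_lt with rfl | hjn
    · linarith [p.node_last, hc.2]
    · linarith [(hj j hjn).2 le_rfl, (p.tag_mem j hjn).2, hp j hjn]

end Mesh

section Sum

variable {𝕜 E F : Type*} [NontriviallyNormedField 𝕜] [NormedAddCommGroup E] [NormedSpace 𝕜 E]
  [NormedAddCommGroup F] [NormedSpace 𝕜 F] (p : TaggedPartition a b) (G : ℝ → E →L[𝕜] F)

/-- The Riemann–Stieltjes sum of the vector function `f` against the operator function `G`. -/
def rsSum (f : ℝ → E) : F :=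
  ∑ i ∈ Finset.range p.n, (G (p.node (i + 1)) - G (p.node i)) (f (p.tag i))

theorem rsSum_add (f₁ f₂ : ℝ → E) : p.rsSum G (f₁ + f₂) = p.rsSum G f₁ + p.rsSum G f₂ := by
  simp only [rsSum, Pi.add_apply, map_add, Finset.sum_add_distrib]

theorem rsSum_sub (f₁ f₂ : ℝ → E) : p.rsSum G (f₁ - f₂) = p.rsSum G f₁ - p.rsSum G f₂ := by
  simp only [rsSum, Pi.sub_apply, map_sub, Finset.sum_sub_distrib]

theorem rsSum_indicator_Ici (x : E) {c : ℝ} {j : ℕ} (hjn : j ≤ p.n)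
    (hj : ∀ i < p.n, c ≤ p.tag i ↔ j ≤ i) :
    p.rsSum G ((Ici c).indicator fun _ => x) = G b x - G (p.node j) x := by
  have hsum : ∑ i ∈ Finset.Ico j p.n, (G (p.node (i + 1)) x - G (p.node i) x) =
      G b x - G (p.node j) x := by
    rw [Finset.sum_Ico_sub (fun i => G (p.node i) x) hjn, p.node_last]
  rw [← hsum, rsSum]
  refine (Finset.sum_subset_zero_on_sdiff (fun i hi => ?_) (fun i hi => ?_) fun i hi => ?_).symm
  · exact Finset.mem_range.2 (Finset.mem_Ico.1 hi).2
  · simp only [Finset.mem_sdiff, Finset.mem_range, Finset.mem_Ico, not_and'] at hi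
    rw [indicator_of_notMem (mem_Ici.not.2 fun hc => hi.2 hi.1 ((hj i hi.1).1 hc)), map_zero]
  · obtain ⟨hji, hin⟩ := Finset.mem_Ico.1 hi
    rw [indicator_of_mem (mem_Ici.2 ((hj i hin).2 hji)), sub_apply]

variable {G}

theorem tendsto_rsSum_indicator_Ici {c : ℝ} (hc : c ∈ Icc a b) (x : E)
    (hG : ContinuousOn (fun s => G s x) (Icc a b)) :
    Tendsto (fun p : TaggedPartition a b => p.rsSum G ((Ici c).indicator fun _ => x)) (fine a b)
      (𝓝 (G b x - G c x)) := by
  choose j hjn hj using fun p : TaggedPartition a b => p.exists_le_tag_iff c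
  have hnode : Tendsto (fun p : TaggedPartition a b => p.node (j p)) (fine a b)
      (𝓝[Icc a b] c) := by
    refine tendsto_nhdsWithin_iff.2 ⟨?_, .of_forall fun p => p.node_mem_Icc (hjn p)⟩
    exact (hasBasis_fine.tendsto_iff Metric.nhds_basis_ball).2 fun δ hδ =>
      ⟨δ, hδ, fun p hp => abs_node_sub_lt hδ hp hc (hjn p) (hj p)⟩
  refine (tendsto_const_nhds.sub ((hG c hc).tendsto.comp hnode)).congr fun p => ?_
  exact (p.rsSum_indicator_Ici G x (hjn p) (hj p)).symm

end Sum

end TaggedPartition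

section Semivariation

open TaggedPartition

variable {𝕜 E F : Type*} [NontriviallyNormedField 𝕜] [NormedAddCommGroup E] [NormedSpace 𝕜 E]
  [NormedAddCommGroup F] [NormedSpace 𝕜 F] {a b C : ℝ} {G : ℝ → E →L[𝕜] F}

/-- Riemann–Stieltjes sums against `G` on `[a, b]` are bounded by `C` times the supremum norm of
the integrand, i.e. the semivariation of `G` on `[a, b]` is at most `C`. -/
def SemivariationLE (G : ℝ → E →L[𝕜] F) (a b C : ℝ) : Prop :=
  ∀ (p : TaggedPartition a b) (f : ℝ → E) (η : ℝ), 0 < η → (∀ ξ ∈ Icc a b, ‖f ξ‖ ≤ η) →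
    ‖p.rsSum G f‖ ≤ C * η

theorem SemivariationLE.tendstoUniformly_rsSum (hG : SemivariationLE G a b C) {ι : Type*}
    {l : Filter ι} {f : ι → ℝ → E} {f₀ : ℝ → E} (hf : TendstoUniformlyOn f f₀ l (Icc a b)) :
    TendstoUniformly (fun k (p : TaggedPartition a b) => p.rsSum G (f k))
      (fun p => p.rsSum G f₀) l := by
  refine Metric.tendstoUniformly_iff.2 fun ε hε => ?_
  have hη : 0 < ε / (|C| + 1) := by positivity
  filter_upwards [Metric.tendstoUniformlyOn_iff.1 hf _ hη] with k hk p
  calc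
    dist (p.rsSum G f₀) (p.rsSum G (f k)) = ‖p.rsSum G (f₀ - f k)‖ := by
      rw [dist_eq_norm, rsSum_sub]
    _ ≤ C * (ε / (|C| + 1)) :=
      hG p _ _ hη fun ξ hξ => by simpa [dist_eq_norm] using (hk ξ hξ).le
    _ < (|C| + 1) * (ε / (|C| + 1)) := by gcongr; linarith [le_abs_self C]
    _ = ε := by field_simp

end Semivariation

namespace BoundedSemivariation

variable {X : Type*} [NormedAddCommGroup X] [NormedSpace ℂ X] {S : ℝ → X →L[ℂ] X} {r t : ℝ}

theorem mono (hS : BoundedSemivariation S r) (htr : t ≤ r) : BoundedSemivariation S t := by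
  rcases htr.eq_or_lt with rfl | htr
  · exact hS
  obtain ⟨C, hC⟩ := hS
  refine ⟨C, fun n d x hd₀ hdn hlt hx => ?_⟩
  let d' : ℕ → ℝ := fun i => if i ≤ n then d i else r
  let x' : ℕ → X := fun i => if i < n then x i else 0
  have hlt' : ∀ i < n + 1, d' i < d' (i + 1) := fun i hi => by
    rcases (Nat.lt_succ_iff.1 hi).eq_or_lt with rfl | hi
    · simpa [d', hdn] using htr
    · simpa [d', hi.le, Nat.succ_le_of_lt hi] using hlt i hi
  have hx' : ∀ i, ‖x' i‖ ≤ 1 := fun i => by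
    by_cases hi : i < n <;> simp [x', hi, hx]
  have hsum := hC (n + 1) d' x' (by simpa [d'] using hd₀) (by simp [d']) hlt' hx'
  rw [Finset.sum_range_succ] at hsum
  convert hsum using 2
  simp only [x', lt_irrefl, if_false, map_zero, add_zero]
  refine Finset.sum_congr rfl fun i hi => ?_
  have hi := Finset.mem_range.1 hi
  simp [d', hi, hi.le, Nat.succ_le_of_lt hi]

theorem exists_norm_sum_le (hS : BoundedSemivariation S t) :
    ∃ C : ℝ, ∀ (n : ℕ) (d : ℕ → ℝ) (x : ℕ → X) (η : ℝ), 0 < η → d 0 = 0 → d n = t →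
      (∀ i < n, d i < d (i + 1)) → (∀ i < n, ‖x i‖ ≤ η) →
      ‖∑ i ∈ Finset.range n, (S (d (i + 1)) - S (d i)) (x i)‖ ≤ C * η := by
  obtain ⟨C, hC⟩ := hS
  refine ⟨C, fun n d x η hη hd₀ hdn hlt hx => ?_⟩
  let y : ℕ → X := fun i => if i < n then (η⁻¹ : ℂ) • x i else 0
  have hy : ∀ i, ‖y i‖ ≤ 1 := fun i => by
    by_cases hi : i < n
    · simpa [y, hi, norm_smul, abs_of_pos hη] using inv_mul_le_one_of_le₀ (hx i hi) hη.le
    · simp [y, hi]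
  have hsum : ∑ i ∈ Finset.range n, (S (d (i + 1)) - S (d i)) (x i) =
      (η : ℂ) • ∑ i ∈ Finset.range n, (S (d (i + 1)) - S (d i)) (y i) := by
    rw [Finset.smul_sum]
    refine Finset.sum_congr rfl fun i hi => ?_
    rw [← map_smul]
    simp [y, Finset.mem_range.1 hi, smul_smul, hη.ne']
  rw [hsum, norm_smul, Complex.norm_real, Real.norm_of_nonneg hη.le, mul_comm]
  exact mul_le_mul_of_nonneg_right (hC n d y hd₀ hdn hlt hy) hη.le

theorem exists_semivariationLE_comp_sub_left (hS : BoundedSemivariation S t) :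
    ∃ C, SemivariationLE (fun s => S (t - s)) 0 t C := by
  obtain ⟨C, hC⟩ := hS.exists_norm_sum_le
  refine ⟨C, fun p f η hη hf => ?_⟩
  have hrev := hC p.n (fun i => t - p.node (p.n - i)) (fun i => f (p.tag (p.n - 1 - i))) η hη
    (by simp [p.node_last]) (by simp [p.node_zero])
    (fun i hi => by
      have := p.node_lt (p.n - (i + 1)) (by omega)
      rw [show p.n - (i + 1) + 1 = p.n - i by omega] at this
      linarith)
    (fun i hi => hf _ (p.tag_mem_Icc (by omega)))
  have hsum : p.rsSum (fun s => S (t - s)) f = -∑ i ∈ Finset.range p.n,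
      (S (t - p.node (p.n - (i + 1))) - S (t - p.node (p.n - i))) (f (p.tag (p.n - 1 - i))) := by
    rw [TaggedPartition.rsSum, ← Finset.sum_range_reflect, ← Finset.sum_neg_distrib]
    refine Finset.sum_congr rfl fun i hi => ?_
    have hi := Finset.mem_range.1 hi
    rw [show p.n - 1 - i + 1 = p.n - i by omega, show p.n - (i + 1) = p.n - 1 - i by omega,
      ← neg_apply, neg_sub]
  rwa [hsum, norm_neg]

end BoundedSemivariation

section UniformLimits

theorem exists_tendsto_of_tendstoUniformly {ι κ Y : Type*} [UniformSpace Y] [CompleteSpace Y]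
    {l : Filter ι} {l' : Filter κ} [l.NeBot] [l'.NeBot] {F : ι → κ → Y} {f : κ → Y} {L : ι → Y}
    (hF : TendstoUniformly F f l) (hL : ∀ i, Tendsto (F i) l' (𝓝 (L i))) :
    ∃ y, Tendsto L l (𝓝 y) ∧ Tendsto f l' (𝓝 y) := by
  have hcauchy : Cauchy (map L l) := by
    refine cauchy_map_iff'.2 (uniformity_hasBasis_closed.tendsto_right_iff.2 fun V hV => ?_)
    refine ((tendstoUniformlyOn_univ.2 hF).uniformCauchySeqOn V hV.1).mono fun i hi => ?_
    exact hV.2.mem_of_tendsto ((hL i.1).prodMk_nhds (hL i.2))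
      (.of_forall fun x => hi x (mem_univ x))
  obtain ⟨y, hy⟩ := cauchy_map_iff_exists_tendsto.1 hcauchy
  exact ⟨y, hy, hF.tendsto_of_eventually_tendsto (.of_forall hL) hy⟩

theorem tendstoUniformlyOn_clm_apply {𝕜 ι T E F : Type*} [NontriviallyNormedField 𝕜]
    [NormedAddCommGroup E] [NormedSpace 𝕜 E] [NormedAddCommGroup F] [NormedSpace 𝕜 F]
    {P : T → E →L[𝕜] F} {K : Set T} {M : ℝ} (hP : ∀ s ∈ K, ‖P s‖ ≤ M) {l : Filter ι}
    {f : ι → T → E} {f₀ : T → E} (hf : TendstoUniformlyOn f f₀ l K) :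
    TendstoUniformlyOn (fun k s => P s (f k s)) (fun s => P s (f₀ s)) l K := by
  refine Metric.tendstoUniformlyOn_iff.2 fun ε hε => ?_
  have hη : 0 < ε / (|M| + 1) := by positivity
  filter_upwards [Metric.tendstoUniformlyOn_iff.1 hf _ hη] with k hk s hs
  calc
    dist (P s (f₀ s)) (P s (f k s)) ≤ ‖P s‖ * dist (f₀ s) (f k s) := (P s).dist_le_opNorm _ _
    _ ≤ (|M| + 1) * dist (f₀ s) (f k s) := by
      gcongr; linarith [hP s hs, le_abs_self M]
    _ < ε := by rw [mul_comm]; exact (lt_div_iff₀ (by positivity)).1 (hk s hs)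

variable {ι E : Type*} [NormedAddCommGroup E] {l : Filter ι} [l.IsCountablyGenerated]
  [l.NeBot] {a b : ℝ} {f : ι → ℝ → E} {f₀ : ℝ → E}

theorem intervalIntegrable_of_tendstoUniformlyOn
    (hf : ∀ k, IntervalIntegrable (f k) volume a b)
    (hlim : TendstoUniformlyOn f f₀ l (uIoc a b)) : IntervalIntegrable f₀ volume a b := by
  have hmeas : AEStronglyMeasurable f₀ (volume.restrict (uIoc a b)) :=
    aestronglyMeasurable_of_tendsto_ae l (fun k => (hf k).def'.aestronglyMeasurable)
      ((ae_restrict_mem measurableSet_uIoc).mono fun s hs => hlim.tendsto_at hs)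
  obtain ⟨k, hk⟩ := (Metric.tendstoUniformlyOn_iff.1 hlim 1 one_pos).exists
  refine ((hf k).norm.add (intervalIntegrable_const (c := (1 : ℝ)))).mono_fun hmeas
    ((ae_restrict_mem measurableSet_uIoc).mono fun s hs => ?_)
  calc
    ‖f₀ s‖ ≤ ‖f k s‖ + ‖f₀ s - f k s‖ := norm_le_norm_add_norm_sub' _ _
    _ ≤ ‖f k s‖ + 1 := by gcongr; exact (dist_eq_norm (f₀ s) (f k s) ▸ hk s hs).le
    _ ≤ _ := Real.le_norm_self _

theorem tendsto_intervalIntegral_of_tendstoUniformlyOn [NormedSpace ℝ E]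
    (hf : ∀ k, IntervalIntegrable (f k) volume a b)
    (hlim : TendstoUniformlyOn f f₀ l (uIoc a b)) :
    Tendsto (fun k => ∫ s in a..b, f k s) l (𝓝 (∫ s in a..b, f₀ s)) := by
  refine intervalIntegral.tendsto_integral_filter_of_dominated_convergence (fun s => ‖f₀ s‖ + 1)
    (.of_forall fun k => (hf k).def'.aestronglyMeasurable) ?_
    ((intervalIntegrable_of_tendstoUniformlyOn hf hlim).norm.add intervalIntegrable_const)
    (.of_forall fun s hs => hlim.tendsto_at hs)
  filter_upwards [Metric.tendstoUniformlyOn_iff.1 hlim 1 one_pos] with k hk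
  refine .of_forall fun s hs => (norm_le_norm_add_norm_sub (f₀ s) (f k s)).trans ?_
  gcongr
  exact (dist_eq_norm (f₀ s) (f k s) ▸ hk s hs).le

end UniformLimits

section Staircase

variable {E : Type*} [NormedAddCommGroup E] {a b : ℝ}

/-- The step function with jumps at `c 0, …, c N` that agrees with `f` at the left endpoint of each
cell, written as a sum of Heaviside steps. -/
noncomputable def staircase (f : ℝ → E) (c : ℕ → ℝ) (N : ℕ) : ℝ → E :=
  (Ici (c 0)).indicator (fun _ => f (c 0)) +
    ∑ j ∈ Finset.range N, (Ici (c (j + 1))).indicator fun _ => f (c (j + 1)) - f (c j)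

theorem staircase_apply (f : ℝ → E) {c : ℕ → ℝ} (hc : Monotone c) {m N : ℕ} (hmN : m ≤ N) {ξ : ℝ}
    (hξ : ξ ∈ Ico (c m) (c (m + 1))) : staircase f c N ξ = f (c m) := by
  have hmem j : ξ ∈ Ici (c (j + 1)) ↔ j < m :=
    ⟨fun h => by_contra fun hj => (h.trans_lt hξ.2).not_ge (hc (by omega)),
      fun hj => (hc hj).trans hξ.1⟩
  have hzero : ξ ∈ Ici (c 0) := (hc m.zero_le).trans hξ.1
  have hfilter : (Finset.range N).filter (· < m) = Finset.range m := by
    ext j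
    simp only [Finset.mem_filter, Finset.mem_range]
    omega
  simp only [staircase, Pi.add_apply, Finset.sum_apply, indicator_apply, hzero, hmem, if_true]
  rw [← Finset.sum_filter, hfilter, Finset.sum_range_sub (fun j => f (c j)), add_sub_cancel]

theorem staircase_induction {Q : (ℝ → E) → Prop}
    (hstep : ∀ c ∈ Icc a b, ∀ x, Q ((Ici c).indicator fun _ => x))
    (hadd : ∀ f₁ f₂, Q f₁ → Q f₂ → Q (f₁ + f₂)) (f : ℝ → E) {c : ℕ → ℝ} {N : ℕ}
    (hc : ∀ j ≤ N, c j ∈ Icc a b) : Q (staircase f c N) := by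
  induction N with
  | zero => simpa [staircase] using hstep _ (hc 0 le_rfl) _
  | succ N ih =>
    rw [staircase, Finset.sum_range_succ, ← add_assoc]
    exact hadd _ _ (ih fun j hj => hc j (hj.trans N.le_succ)) (hstep _ (hc _ le_rfl) _)

theorem dist_staircase_lt {f : ℝ → E} {δ ε h : ℝ} (hh : 0 < h) (hhδ : h < δ)
    (hf : ∀ ξ ∈ Icc a b, ∀ η ∈ Icc a b, dist ξ η < δ → dist (f ξ) (f η) < ε)
    {ξ : ℝ} (hξ : ξ ∈ Icc a b) :
    dist (f ξ) (staircase f (fun j => a + j * h) ⌊(b - a) / h⌋₊ ξ) < ε := by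
  have hmono : Monotone fun j : ℕ => a + j * h := fun i j hij => by
    dsimp only
    gcongr
  have hnonneg : 0 ≤ (ξ - a) / h := div_nonneg (by linarith [hξ.1]) hh.le
  have hmN : ⌊(ξ - a) / h⌋₊ ≤ ⌊(b - a) / h⌋₊ :=
    Nat.floor_le_floor (by gcongr; exact hξ.2)
  have hleft := (le_div_iff₀ hh).1 (Nat.floor_le hnonneg)
  have hright := (div_lt_iff₀ hh).1 (Nat.lt_floor_add_one ((ξ - a) / h))
  rw [staircase_apply f hmono hmN ⟨by linarith, by push_cast; linarith⟩]
  refine hf ξ hξ _ ⟨le_add_of_nonneg_right (by positivity), by linarith [hξ.2]⟩ ?_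
  rw [Real.dist_eq, abs_of_nonneg (by linarith)]
  linarith

theorem tendstoUniformlyOn_staircase {f : ℝ → E} (hf : ContinuousOn f (Icc a b)) :
    TendstoUniformlyOn
      (fun k : ℕ => staircase f (fun j => a + j * (1 / (k + 1))) ⌊(b - a) / (1 / (k + 1))⌋₊)
      f atTop (Icc a b) := by
  refine Metric.tendstoUniformlyOn_iff.2 fun ε hε => ?_
  obtain ⟨δ, hδ, hfδ⟩ :=
    Metric.uniformContinuousOn_iff.1 (isCompact_Icc.uniformContinuousOn_of_continuous hf) ε hε
  filter_upwards [tendsto_one_div_add_atTop_nhds_zero_nat.eventually_lt_const hδ] with k hk ξ hξ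
  exact dist_staircase_lt (by positivity) hk hfδ hξ

theorem continuousOn_Icc_induction {Q : (ℝ → E) → Prop} (hab : a ≤ b)
    (hstep : ∀ c ∈ Icc a b, ∀ x, Q ((Ici c).indicator fun _ => x))
    (hadd : ∀ f₁ f₂, Q f₁ → Q f₂ → Q (f₁ + f₂))
    (hlim : ∀ (f : ℕ → ℝ → E) (f₀ : ℝ → E), (∀ k, Q (f k)) →
      TendstoUniformlyOn f f₀ atTop (Icc a b) → Q f₀)
    {f : ℝ → E} (hf : ContinuousOn f (Icc a b)) : Q f := by
  refine hlim _ f (fun k => staircase_induction hstep hadd f fun j hj => ?_)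
    (tendstoUniformlyOn_staircase hf)
  have hh : (0 : ℝ) < 1 / (k + 1) := by positivity
  have hj := (le_div_iff₀ hh).1 ((Nat.le_floor_iff (div_nonneg (sub_nonneg.2 hab) hh.le)).1 hj)
  exact ⟨le_add_of_nonneg_right (by positivity), by linarith⟩

end Staircase

section Duhamel

open TaggedPartition

variable {𝕜 E F F' : Type*} [NontriviallyNormedField 𝕜] [NormedAddCommGroup E] [NormedSpace 𝕜 E]
  [NormedAddCommGroup F] [NormedSpace 𝕜 F]
  [NormedAddCommGroup F'] [NormedSpace 𝕜 F']
  {P : ℝ → E →L[𝕜] F} {G : ℝ → E →L[𝕜] F'} {Γ : AddSubmonoid (F × F')} {a b c : ℝ}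

theorem clm_apply_indicator_const (P : ℝ → E →L[𝕜] F) (K : Set ℝ) (x : E) (s : ℝ) :
    P s (K.indicator (fun _ => x) s) = K.indicator (fun s => P s x) s := by
  by_cases hs : s ∈ K <;> simp [hs]

theorem intervalIntegrable_apply_indicator {K : Set ℝ} (hK : MeasurableSet K) {x : E}
    (hP : IntervalIntegrable (fun s => P s x) volume a b) :
    IntervalIntegrable (fun s => P s (K.indicator (fun _ => x) s)) volume a b := by
  simp only [clm_apply_indicator_const]
  exact ⟨hP.1.indicator hK, hP.2.indicator hK⟩

variable [NormedSpace ℝ F]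

theorem integral_apply_indicator_Ici (hc : c ∈ Icc a b) (x : E) :
    ∫ s in a..b, P s ((Ici c).indicator (fun _ => x) s) = ∫ s in c..b, P s x := by
  simp only [clm_apply_indicator_const]
  rw [intervalIntegral.integral_of_le (hc.1.trans hc.2), intervalIntegral.integral_of_le hc.2,
    ← integral_Icc_eq_integral_Ioc, ← integral_Icc_eq_integral_Ioc,
    setIntegral_indicator measurableSet_Ici, ← Ici_inter_Iic, inter_right_comm, Ici_inter_Ici,
    sup_eq_right.2 hc.1, Ici_inter_Iic]

/-- The relation `Γ`, in applications the graph of an operator `A`, sends `∫ s in a..b, P s (f s)`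
to minus the limit of the Riemann–Stieltjes sums of `f` against `G`. -/
def MapsToStieltjes (Γ : AddSubmonoid (F × F')) (P : ℝ → E →L[𝕜] F) (G : ℝ → E →L[𝕜] F')
    (a b : ℝ) (f : ℝ → E) : Prop :=
  IntervalIntegrable (fun s => P s (f s)) volume a b ∧
    ∃ z, (∫ s in a..b, P s (f s), z) ∈ Γ ∧
      Tendsto (fun p : TaggedPartition a b => p.rsSum G f) (fine a b) (𝓝 (-z))

theorem MapsToStieltjes.add {f₁ f₂ : ℝ → E} (h₁ : MapsToStieltjes Γ P G a b f₁)
    (h₂ : MapsToStieltjes Γ P G a b f₂) : MapsToStieltjes Γ P G a b (f₁ + f₂) := by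
  obtain ⟨hint₁, z₁, hmem₁, hlim₁⟩ := h₁
  obtain ⟨hint₂, z₂, hmem₂, hlim₂⟩ := h₂
  simp only [MapsToStieltjes, Pi.add_apply, map_add, rsSum_add]
  refine ⟨hint₁.add hint₂, z₁ + z₂, ?_, neg_add z₁ z₂ ▸ hlim₁.add hlim₂⟩
  rw [intervalIntegral.integral_add hint₁ hint₂]
  exact Γ.add_mem hmem₁ hmem₂

theorem mapsToStieltjes_indicator_Ici (hc : c ∈ Icc a b) {x : E}
    (hP : IntervalIntegrable (fun s => P s x) volume a b)
    (hG : ContinuousOn (fun s => G s x) (Icc a b))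
    (hmem : (∫ s in c..b, P s x, G c x - G b x) ∈ Γ) :
    MapsToStieltjes Γ P G a b ((Ici c).indicator fun _ => x) := by
  refine ⟨intervalIntegrable_apply_indicator measurableSet_Ici hP, G c x - G b x, ?_, ?_⟩
  · rwa [integral_apply_indicator_Ici hc]
  · rw [neg_sub]
    exact tendsto_rsSum_indicator_Ici hc x hG

theorem mapsToStieltjes_of_tendstoUniformlyOn [CompleteSpace F'] (hab : a ≤ b)
    (hΓ : IsClosed (Γ : Set (F × F'))) {M C : ℝ} (hP : ∀ s ∈ Icc a b, ‖P s‖ ≤ M)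
    (hG : SemivariationLE G a b C) {ι : Type*} {l : Filter ι} [l.IsCountablyGenerated] [l.NeBot]
    {f : ι → ℝ → E} {f₀ : ℝ → E} (hf : ∀ k, MapsToStieltjes Γ P G a b (f k))
    (hlim : TendstoUniformlyOn f f₀ l (Icc a b)) : MapsToStieltjes Γ P G a b f₀ := by
  choose hint z hmem hrs using hf
  have := fine_neBot hab
  obtain ⟨w, hzw, hw⟩ :=
    exists_tendsto_of_tendstoUniformly (hG.tendstoUniformly_rsSum hlim) hrs
  have hPlim := (tendstoUniformlyOn_clm_apply hP hlim).mono
    (uIoc_of_le hab ▸ Ioc_subset_Icc_self : uIoc a b ⊆ Icc a b)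
  refine ⟨intervalIntegrable_of_tendstoUniformlyOn hint hPlim, -w, ?_, by rwa [neg_neg]⟩
  have hz : Tendsto z l (𝓝 (-w)) := by simpa using hzw.neg
  exact hΓ.mem_of_tendsto
    ((tendsto_intervalIntegral_of_tendstoUniformlyOn hint hPlim).prodMk_nhds hz) (.of_forall hmem)

theorem mapsToStieltjes_of_continuousOn [CompleteSpace F'] (hab : a ≤ b)
    (hΓ : IsClosed (Γ : Set (F × F'))) {M C : ℝ} (hP : ∀ s ∈ Icc a b, ‖P s‖ ≤ M)
    (hP_int : ∀ x, IntervalIntegrable (fun s => P s x) volume a b)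
    (hG_cont : ∀ x, ContinuousOn (fun s => G s x) (Icc a b)) (hG : SemivariationLE G a b C)
    (hmem : ∀ c ∈ Icc a b, ∀ x, (∫ s in c..b, P s x, G c x - G b x) ∈ Γ)
    {f : ℝ → E} (hf : ContinuousOn f (Icc a b)) : MapsToStieltjes Γ P G a b f :=
  continuousOn_Icc_induction hab
    (fun c hc x => mapsToStieltjes_indicator_Ici hc (hP_int x) (hG_cont x) (hmem c hc x))
    (fun _ _ => MapsToStieltjes.add)
    (fun _ _ => mapsToStieltjes_of_tendstoUniformlyOn hab hΓ hP hG) hf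

end Duhamel

/-- `S` is an `α`-times resolvent family with closed, densely defined generator `A`. Commutation
with `A` is expressed through the graph, and `apply_eq` at `t = 0` encodes `S 0 = I`. -/
structure IsResolventFamily {X : Type*} [NormedAddCommGroup X] [NormedSpace ℂ X] (α : ℝ)
    (A : X →ₗ.[ℂ] X) (S : ℝ → X →L[ℂ] X) : Prop where
  isClosed_graph : IsClosed (A.graph : Set (X × X))
  dense_domain : Dense (A.domain : Set X)
  continuousOn : ∀ x : X, ContinuousOn (fun t => S t x) (Ici (0 : ℝ))
  map_graph : ∀ t : ℝ, 0 ≤ t → ∀ x y : X, (x, y) ∈ A.graph → (S t x, S t y) ∈ A.graph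
  apply_eq : ∀ t : ℝ, 0 ≤ t → ∀ x y : X, (x, y) ∈ A.graph →
    S t x = x + ∫ s in (0 : ℝ)..t, g α (t - s) • S s y

section Resolvent

variable {X : Type*} [NormedAddCommGroup X] [NormedSpace ℂ X] {α : ℝ}
  {A : X →ₗ.[ℂ] X} {S : ℝ → X →L[ℂ] X}

theorem Pa_eq_fracInt (t : ℝ) (x : X) : Pa α S t x = fracInt (α - 1) (fun s => S s x) t := rfl

variable [CompleteSpace X]

theorem integral_Pa_sub_left (hα : 1 < α) {x : X} {c t : ℝ} (hct : c ≤ t)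
    (hS : ContinuousOn (fun s => S s x) (Icc 0 (t - c))) :
    ∫ s in c..t, Pa α S (t - s) x = fracInt α (fun s => S s x) (t - c) := by
  rw [intervalIntegral.integral_comp_sub_left fun u => Pa α S u x, sub_self]
  simp only [Pa_eq_fracInt]
  rw [integral_fracInt (sub_pos.2 hα) (sub_nonneg.2 hct) hS, sub_add_cancel]

theorem IsResolventFamily.fracInt_mem_graph (hAS : IsResolventFamily α A S) (hα : 0 < α)
    {t : ℝ} (ht : 0 ≤ t) (x : X) :
    (fracInt α (fun s => S s x) t, S t x - x) ∈ A.graph := by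
  have hS x : ContinuousOn (fun s => S s x) (Icc 0 t) :=
    (hAS.continuousOn x).mono Icc_subset_Ici_self
  obtain ⟨P, _, hP⟩ := exists_continuousLinearMap_fracInt hα hS
  have hPt := (hP t (right_mem_Icc.2 ht)).2
  suffices h : ∀ x, (P t x, S t x - x) ∈ A.graph by rw [← hPt]; exact h x
  refine fun x => hAS.dense_domain.induction (P := fun x => (P t x, S t x - x) ∈ A.graph) ?_
    (hAS.isClosed_graph.preimage (by fun_prop)) x
  intro x hx
  have hgraph : (x, A ⟨x, hx⟩) ∈ A.graph := A.mem_graph ⟨x, hx⟩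
  rw [hPt, hAS.apply_eq t ht _ _ hgraph, add_sub_cancel_left]
  refine intervalIntegral_prodMk_mem_of_isClosed (Γ := A.graph.restrictScalars ℝ)
    hAS.isClosed_graph ht (intervalIntegrable_g_smul hα ht (hS _))
    (intervalIntegrable_g_smul hα ht (hS _)) ?_
  exact fun s hs => (A.graph.restrictScalars ℝ).smul_mem (g α (t - s))
    (hAS.map_graph s hs.1 _ _ hgraph)

theorem IsResolventFamily.integral_Pa_mem_graph (hAS : IsResolventFamily α A S) (hα : 1 < α)
    {c t : ℝ} (hct : c ≤ t) (x : X) :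
    (∫ s in c..t, Pa α S (t - s) x, S (t - c) x - S (t - t) x) ∈ A.graph := by
  have hmem {u : ℝ} (hu : 0 ≤ u) : (fracInt α (fun s => S s x) u, S u x - x) ∈ A.graph :=
    hAS.fracInt_mem_graph (by linarith) hu x
  rw [integral_Pa_sub_left hα hct ((hAS.continuousOn x).mono Icc_subset_Ici_self)]
  simpa [fracInt] using A.graph.sub_mem (hmem (sub_nonneg.2 hct)) (hmem (sub_self t).ge)

theorem IsResolventFamily.exists_mapsToStieltjes_Pa (hAS : IsResolventFamily α A S) (hα : 1 < α)
    {t : ℝ} (ht : 0 ≤ t) (hsv : BoundedSemivariation S t) {f : ℝ → X}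
    (hf : ContinuousOn f (Icc 0 t)) :
    ∃ P : ℝ → X →L[ℂ] X, (∀ s ∈ Icc 0 t, ∀ x, P s x = Pa α S (t - s) x) ∧
      MapsToStieltjes A.graph.toAddSubmonoid P (fun s => S (t - s)) 0 t f := by
  have hS x : ContinuousOn (fun s => S s x) (Icc 0 t) :=
    (hAS.continuousOn x).mono Icc_subset_Ici_self
  have hreflect : MapsTo (t - ·) (Icc 0 t) (Icc 0 t) := fun s hs =>
    ⟨sub_nonneg.2 hs.2, sub_le_self t hs.1⟩
  obtain ⟨P, M, hP⟩ := exists_continuousLinearMap_fracInt (sub_pos.2 hα) hS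
  obtain ⟨C, hC⟩ := hsv.exists_semivariationLE_comp_sub_left
  have hP_eq : ∀ s ∈ Icc 0 t, ∀ x, P (t - s) x = Pa α S (t - s) x := fun s hs =>
    (hP _ (hreflect hs)).2
  have hP_int x : IntervalIntegrable (fun s => P (t - s) x) volume 0 t := by
    have hPa := ((intervalIntegrable_fracInt (sub_pos.2 hα) ht (hS x)).comp_sub_left t).symm
    rw [sub_self, sub_zero] at hPa
    refine hPa.congr fun s hs => (hP_eq s ?_ x).symm
    exact Ioc_subset_Icc_self (uIoc_of_le ht ▸ hs)
  refine ⟨fun s => P (t - s), hP_eq, mapsToStieltjes_of_continuousOn ht hAS.isClosed_graph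
    (fun s hs => (hP _ (hreflect hs)).1) hP_int (fun x => (hS x).comp (by fun_prop) hreflect) hC
    (fun c hc x => ?_) hf⟩
  rw [intervalIntegral.integral_congr fun s hs => hP_eq s
    (Icc_subset_Icc_left hc.1 (uIcc_of_le hc.2 ▸ hs)) x]
  exact hAS.integral_Pa_mem_graph hα hc.2 x

end Resolvent

theorem stmt_5_general
    {X : Type*} [NormedAddCommGroup X] [NormedSpace ℂ X] [CompleteSpace X]
    {α : ℝ} (hα : 1 < α) {A : X →ₗ.[ℂ] X} {S : ℝ → X →L[ℂ] X} (hAS : IsResolventFamily α A S)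
    {t : ℝ} (ht : 0 ≤ t) (hsv : BoundedSemivariation S t)
    {f : ℝ → X} (hf : ContinuousOn f (Icc 0 t)) :
    ∃ z : X, ((∫ s in (0 : ℝ)..t, Pa α S (t - s) (f s)), z) ∈ A.graph ∧
      ∀ ε > 0, ∃ δ > 0, ∀ (n : ℕ) (s ξ : ℕ → ℝ),
        s 0 = 0 → s n = t → (∀ i < n, s i < s (i + 1)) →
        (∀ i < n, s (i + 1) - s i < δ) →
        (∀ i < n, ξ i ∈ Icc (s i) (s (i + 1))) →
        ‖z + ∑ i ∈ Finset.range n, (S (t - s (i + 1)) - S (t - s i)) (f (ξ i))‖ < ε := by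
  obtain ⟨P, hP, -, z, hz, hlim⟩ := hAS.exists_mapsToStieltjes_Pa hα ht hsv hf
  refine ⟨z, ?_, fun ε hε => ?_⟩
  · rwa [intervalIntegral.integral_congr fun s hs => hP s (uIcc_of_le ht ▸ hs) (f s)] at hz
  · obtain ⟨δ, hδ, hsum⟩ :=
      (TaggedPartition.hasBasis_fine.tendsto_iff Metric.nhds_basis_ball).1 hlim ε hε
    refine ⟨δ, hδ, fun n s ξ hs₀ hsn hlt hmesh hξ => ?_⟩
    have hp := hsum ⟨n, s, ξ, hs₀, hsn, hlt, hξ⟩ hmesh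
    rwa [mem_ball_iff_norm', ← norm_neg, neg_sub, sub_neg_eq_add, add_comm] at hp

theorem stmt_5
    {X : Type*} [NormedAddCommGroup X] [NormedSpace ℂ X] [CompleteSpace X]
    (α : ℝ) (hα1 : 1 < α) (hα2 : α < 2)
    (A : X →ₗ.[ℂ] X) (hA_closed : IsClosed (A.graph : Set (X × X)))
    (hA_dense : Dense (A.domain : Set X))
    (S : ℝ → X →L[ℂ] X)
    (hS_cont : ∀ x : X, ContinuousOn (fun t => S t x) (Ici (0:ℝ)))
    (hS_zero : S 0 = 1)
    (hS_dom : ∀ t : ℝ, 0 ≤ t → ∀ x ∈ A.domain, S t x ∈ A.domain)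
    (hS_comm : ∀ t : ℝ, 0 ≤ t → ∀ x y : X, (x, y) ∈ A.graph → (S t x, S t y) ∈ A.graph)
    (hS_eq : ∀ t : ℝ, 0 ≤ t → ∀ x y : X, (x, y) ∈ A.graph →
      S t x = x + ∫ s in (0:ℝ)..t, g α (t - s) • S s y)
    (r : ℝ) (hr : 0 < r) (hsv : BoundedSemivariation S r)
    (f : ℝ → X) (hf : ContinuousOn f (Icc 0 r)) :
    ∀ t ∈ Icc (0:ℝ) r, ∃ z : X,
      ((∫ s in (0:ℝ)..t, Pa α S (t - s) (f s)), z) ∈ A.graph ∧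
      ∀ ε > 0, ∃ δ > 0, ∀ (n : ℕ) (s ξ : ℕ → ℝ),
        s 0 = 0 → s n = t → (∀ i < n, s i < s (i + 1)) →
        (∀ i < n, s (i + 1) - s i < δ) →
        (∀ i < n, ξ i ∈ Icc (s i) (s (i + 1))) →
        ‖z + ∑ i ∈ Finset.range n, (S (t - s (i + 1)) - S (t - s i)) (f (ξ i))‖ < ε := by
  exact fun t ht => stmt_5_general hα1 ⟨hA_closed, hA_dense, hS_cont, hS_comm, hS_eq⟩ ht.1
    (hsv.mono ht.2) (hf.mono (Icc_subset_Icc_right ht.2))
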